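/- arXiv:2401.05053 — 3 statements merged into one kernel-verified Lean document; each statement's English description precedes it below -/
import Mathlib

section
/- Let ψ = (φ₁,…,φₙ; σ) : ℤ^k → (ℤ^k)^n ⋊ Σ_n be a group homomorphism. If ψ is induced by an affine n-valued map, then the image of ψ is torsion free (i.e., no nontrivial element of the image has finite order). -/
/-!
Evaluating the lifting condition at `t = 0` gives `A_i z + a_i = a_{σ_z⁻¹(i)} + φ_i(z)`. If
`ψ(z)^m = ψ(mz) = 1`, this condition for `mz` reads `m A_i z = 0`, so `A_i z = 0` and
`a_i - a_{σ_z⁻¹(i)} = φ_i(z)` is an integer vector. The non-coincidence condition at `t = 0` then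
forces `σ_z⁻¹(i) = i`, and consequently `φ_i(z) = 0`.
-/

/-- The group `(ℤ^k)^n ⋊ Σ_n`, with underlying set `(ℤ^k)^n × Σ_n` and
product `(α₁,…,αₙ;σ)(β₁,…,βₙ;τ) = (α₁+β_{σ⁻¹(1)},…,αₙ+β_{σ⁻¹(n)}; στ)`. -/
structure Wreath (n k : ℕ) where
  vec : Fin n → Fin k → ℤ
  perm : Equiv.Perm (Fin n)

namespace Wreath

variable {n k : ℕ}

instance : Mul (Wreath n k) :=
  ⟨fun a b => ⟨fun i => a.vec i + b.vec (a.perm⁻¹ i), a.perm * b.perm⟩⟩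

instance : One (Wreath n k) := ⟨⟨fun _ => 0, 1⟩⟩

instance : Inv (Wreath n k) :=
  ⟨fun a => ⟨fun i => -(a.vec (a.perm i)), a.perm⁻¹⟩⟩

theorem mul_def (a b : Wreath n k) :
    a * b = ⟨fun i => a.vec i + b.vec (a.perm⁻¹ i), a.perm * b.perm⟩ := rfl

theorem one_def : (1 : Wreath n k) = ⟨fun _ => 0, 1⟩ := rfl

theorem inv_def (a : Wreath n k) :
    a⁻¹ = ⟨fun i => -(a.vec (a.perm i)), a.perm⁻¹⟩ := rfl

instance : Group (Wreath n k) where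
  mul_assoc a b c := by
    simp only [mul_def, mk.injEq, mul_inv_rev, Equiv.Perm.mul_apply, mul_assoc]
    exact ⟨funext fun i => by simp [Equiv.Perm.mul_apply, add_assoc], trivial⟩
  one_mul a := by
    simp only [mul_def, one_def, one_mul]
    cases a; simp
  mul_one a := by
    simp only [mul_def, one_def, mul_one]
    cases a; simp
  inv_mul_cancel a := by
    simp only [mul_def, inv_def, one_def, mk.injEq, inv_mul_cancel]
    exact ⟨funext fun i => by simp, trivial⟩

end Wreath

/-- The inclusion of the standard lattice `ℤ^k` into `ℝ^k`. -/
def coeVec {k : ℕ} (z : Fin k → ℤ) : Fin k → ℝ := fun j => (z j : ℝ)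

/-- The homomorphism `ψ : ℤ^k → (ℤ^k)^n ⋊ Σ_n`, `ψ(z) = (φ₁(z),…,φₙ(z);σ_z)`, is induced by
an affine `n`-valued map of the `k`-torus. -/
def InducedByAffine {n k : ℕ} (ψ : (Fin k → ℤ) → Wreath n k) : Prop :=
  ∃ (A : Fin n → Matrix (Fin k) (Fin k) ℝ) (a : Fin n → Fin k → ℝ),
    (∀ (i : Fin n) (z : Fin k → ℤ) (t : Fin k → ℝ),
      (A i).mulVec (t + coeVec z) + a i =
        (A ((ψ z).perm⁻¹ i)).mulVec t + a ((ψ z).perm⁻¹ i) + coeVec ((ψ z).vec i)) ∧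
    (∀ i j : Fin n, i ≠ j → ∀ t : Fin k → ℝ,
      ¬ ∃ w : Fin k → ℤ, ((A i).mulVec t + a i) - ((A j).mulVec t + a j) = coeVec w)

theorem stmt14 {k n : ℕ} (hk : 1 ≤ k) (hn : 1 ≤ n)
    (ψ : (Fin k → ℤ) → Wreath n k)
    (hψ : ∀ z₁ z₂ : Fin k → ℤ, ψ (z₁ + z₂) = ψ z₁ * ψ z₂)
    (haff : InducedByAffine ψ) :
    ∀ (z : Fin k → ℤ) (m : ℕ), 0 < m → (ψ z) ^ m = 1 → ψ z = 1 := by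
  obtain ⟨A, a, h1, h2⟩ := haff
  intro z m hm hz
  have hpow : ∀ l : ℕ, ψ (l • z) = ψ z ^ l := by
    intro l
    induction l with
    | zero => simpa using hψ 0 0
    | succ l ih => rw [succ_nsmul, hψ, ih, pow_succ]
  have hcoe : coeVec (m • z) = (m : ℝ) • coeVec z := by
    ext j; simp [coeVec]
  have hm0 : (m : ℝ) ≠ 0 := by exact_mod_cast hm.ne'
  have hAz : ∀ i, (A i).mulVec (coeVec z) = 0 := by
    intro i
    have h := h1 i (m • z) 0
    have h0 : coeVec ((1 : Wreath n k).vec i) = 0 := by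
      ext j; simp [coeVec, Wreath.one_def]
    rw [hpow, hz, hcoe, h0, zero_add, Matrix.mulVec_smul] at h
    simp only [Wreath.one_def, inv_one, Equiv.Perm.one_apply, Matrix.mulVec_zero, zero_add,
      add_zero, add_eq_right] at h
    exact (smul_eq_zero.mp h).resolve_left hm0
  have key : ∀ i, a i = a ((ψ z).perm⁻¹ i) + coeVec ((ψ z).vec i) := by
    intro i
    simpa [hAz i] using h1 i z 0
  have hfix : ∀ i, (ψ z).perm⁻¹ i = i := by
    intro i
    by_contra hne
    refine h2 i _ (Ne.symm hne) 0 ⟨(ψ z).vec i, ?_⟩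
    simpa only [Matrix.mulVec_zero, zero_add, sub_eq_iff_eq_add'] using key i
  have hvec : ∀ i j, (ψ z).vec i j = 0 := by
    intro i j
    have h := congrFun (key i) j
    rw [hfix i] at h
    simpa [coeVec] using h
  have hperm : (ψ z).perm = 1 := inv_eq_one.mp (Equiv.ext hfix)
  have hvec' : (ψ z).vec = fun _ => 0 := funext fun i => funext (hvec i)
  calc ψ z = ⟨(ψ z).vec, (ψ z).perm⟩ := rfl
    _ = 1 := by rw [hperm, hvec', Wreath.one_def]
end

section
/- Let n ≥ 2 and let c ∈ Σ_n be an n-cycle (for instance c = (n … 2 1)). Define ψ : ℤ² → (ℤ²)^n ⋊ Σ_n by ψ(z₁,z₂) = ((0,0),…,(0,0); c^{z₁}). Then ψ is a group homomorphism, it is irreducible, and it is not induced by any affine n-valued map. -/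
theorem stmt16 {n : ℕ} (hn : 2 ≤ n)
    (c : Equiv.Perm (Fin n)) (hc : c.IsCycle ∧ c.support = Finset.univ)
    (ψ : (Fin 2 → ℤ) → Wreath n 2)
    (hψdef : ∀ z : Fin 2 → ℤ, ψ z = ⟨fun _ _ => 0, c ^ (z 0)⟩) :
    (∀ z w : Fin 2 → ℤ, ψ (z + w) = ψ z * ψ w) ∧
    (∀ i j : Fin n, ∃ z : Fin 2 → ℤ, (ψ z).perm i = j) ∧
    ¬ InducedByAffine ψ := by
  refine ⟨?_, ?_, ?_⟩
  · intro z w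
    simp [hψdef, Wreath.mul_def, zpow_add]
    rfl
  · intro i j
    have hi : c i ≠ i := by
      rw [← Equiv.Perm.mem_support, hc.2]; exact Finset.mem_univ i
    have hj : c j ≠ j := by
      rw [← Equiv.Perm.mem_support, hc.2]; exact Finset.mem_univ j
    obtain ⟨m, hm⟩ := hc.1.exists_zpow_eq hi hj
    exact ⟨fun _ => m, by simpa [hψdef] using hm⟩
  · rintro ⟨A, a, h1, h2⟩
    let i : Fin n := ⟨0, by omega⟩
    let e : Fin 2 → ℤ := Pi.single 0 1
    have hne : i ≠ c⁻¹ i := by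
      intro h
      have hi : c i ≠ i := by
        rw [← Equiv.Perm.mem_support, hc.2]; exact Finset.mem_univ i
      exact hi ((Equiv.Perm.eq_inv_iff_eq).1 h)
    have hcoe : ∀ m : ℕ, coeVec (m • e) = (m : ℝ) • coeVec e := by
      intro m; ext l; simp [coeVec]
    have hzero : coeVec (0 : Fin 2 → ℤ) = 0 := by ext l; simp [coeVec]
    have hAe : (A i).mulVec (coeVec e) = 0 := by
      have h := h1 i (orderOf c • e) 0
      have hp : (ψ (orderOf c • e)).perm = 1 := by
        simp [hψdef, e, pow_orderOf_eq_one]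
      have hv : (ψ (orderOf c • e)).vec i = 0 := by rw [hψdef]; rfl
      rw [hp, hv, hcoe, hzero] at h
      have h' : (orderOf c : ℝ) • (A i).mulVec (coeVec e) = 0 := by
        simpa only [zero_add, Matrix.mulVec_smul, Matrix.mulVec_zero, inv_one,
          Equiv.Perm.one_apply, add_zero, add_eq_right] using h
      exact (smul_eq_zero.1 h').resolve_left (by exact_mod_cast (orderOf_pos c).ne')
    refine h2 i (c⁻¹ i) hne 0 ⟨0, ?_⟩
    have h := h1 i e 0
    have hp : (ψ e).perm = c := by simp [hψdef, e]
    have hv : (ψ e).vec i = 0 := by rw [hψdef]; rfl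
    rw [hp, hv, hzero, Matrix.mulVec_add, hAe] at h
    rw [hzero, sub_eq_zero]
    simpa only [add_zero] using h
end

section
/- Let n ≥ 2 and let c ∈ Σ_n be an n-cycle (for instance c = (n … 2 1)). Define ψ : ℤ² → (ℤ²)^n ⋊ Σ_n by ψ(z₁,z₂) = ((z₁,0),…,(z₁,0); c^{z₁}). Then ψ is a group homomorphism whose image is torsion free (no nontrivial element of the image has finite order), and yet ψ is not induced by any affine n-valued map. -/
theorem stmt17 {n : ℕ} (hn : 2 ≤ n)
    (c : Equiv.Perm (Fin n)) (hc : c.IsCycle ∧ c.support = Finset.univ)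
    (ψ : (Fin 2 → ℤ) → Wreath n 2)
    (hψdef : ∀ z : Fin 2 → ℤ, ψ z = ⟨fun _ => ![z 0, 0], c ^ (z 0)⟩) :
    (∀ z w : Fin 2 → ℤ, ψ (z + w) = ψ z * ψ w) ∧
    (∀ (z : Fin 2 → ℤ) (m : ℕ), 0 < m → (ψ z) ^ m = 1 → ψ z = 1) ∧
    ¬ InducedByAffine ψ := by
  have hmul : ∀ z w : Fin 2 → ℤ, ψ (z + w) = ψ z * ψ w := by
    intro z w
    simp only [hψdef, Wreath.mul_def, Wreath.mk.injEq, Pi.add_apply, zpow_add, and_true]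
    funext i j
    fin_cases j <;> simp
  let i₀ : Fin n := ⟨0, by omega⟩
  have h_zero : ψ 0 = 1 := by
    rw [hψdef, Wreath.one_def, Wreath.mk.injEq]
    refine ⟨?_, by simp⟩
    funext i j
    fin_cases j <;> simp
  refine ⟨hmul, ?_, ?_⟩
  · intro z m hm hz
    have hpow : ∀ m : ℕ, ψ (m • z) = ψ z ^ m := by
      intro m
      induction m with
      | zero => simpa using h_zero
      | succ k ih => rw [succ_nsmul, hmul, ih, pow_succ]
    rw [← hpow m, hψdef, Wreath.one_def, Wreath.mk.injEq] at hz
    have h0 : (m : ℤ) * z 0 = 0 := by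
      simpa using congrFun (congrFun hz.1 i₀) 0
    have hz0 : z 0 = 0 := by
      rcases mul_eq_zero.mp h0 with h | h
      · omega
      · exact h
    rw [hψdef, hz0, ← h_zero, hψdef]
    rfl
  · rintro ⟨A, a, hA, hdis⟩
    have hm : 0 < orderOf c := orderOf_pos c
    have hne : i₀ ≠ c⁻¹ i₀ := by
      intro h
      have hi : i₀ ∈ c.support := hc.2 ▸ Finset.mem_univ i₀
      exact Equiv.Perm.mem_support.mp hi (Equiv.Perm.eq_inv_iff_eq.mp h)
    -- `z = (orderOf c) e₁` acts with trivial permutation, which forces `A e₁ = e₁`.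
    have hAe : (A i₀).mulVec (coeVec ![1, 0]) = coeVec ![1, 0] := by
      have h := hA i₀ ![(orderOf c : ℤ), 0] 0
      have hsmul : coeVec ![(orderOf c : ℤ), 0] = (orderOf c : ℝ) • coeVec ![1, 0] := by
        funext j
        fin_cases j <;> simp [coeVec]
      simp only [hψdef, Matrix.cons_val_zero, zpow_natCast, pow_orderOf_eq_one, inv_one,
        Equiv.Perm.one_apply, zero_add, Matrix.mulVec_zero, hsmul, Matrix.mulVec_smul] at h
      rw [add_comm] at h
      exact smul_right_injective _ (Nat.cast_ne_zero.mpr hm.ne') (add_left_cancel h)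
    have h := hA i₀ ![1, 0] 0
    simp only [hψdef, Matrix.cons_val_zero, zpow_one, zero_add, hAe] at h
    refine hdis i₀ (c⁻¹ i₀) hne 0 ⟨0, ?_⟩
    have h' : a i₀ = (A (c⁻¹ i₀)).mulVec 0 + a (c⁻¹ i₀) := by
      rw [add_comm] at h
      exact add_right_cancel h
    rw [← h', Matrix.mulVec_zero, zero_add, sub_self]
    funext j
    simp [coeVec]
end
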